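/- Let (f, f♭) : (R, P) → (A, M) be a map of pre-log rings. Let M ⊕_P M denote the pushout in commutative monoids of the diagram M ← P → M (both legs f♭), let μ : M ⊕_P M → M be the codiagonal induced by the identity on both copies of M, and let (M ⊕_P M)^rep be the repletion of μ, namely the pullback of η : M → M^gp and μ^gp : (M ⊕_P M)^gp → M^gp. Let C be the commutative ring (A ⊗_R A) ⊗_{ℤ[M ⊕_P M]} ℤ[(M ⊕_P M)^rep], where ℤ[M ⊕_P M] → A ⊗_R A is the ring map induced by the monoid map M ⊕_P M → (A ⊗_R A, ·) with components m ↦ α(m) ⊗ 1 and m ↦ 1 ⊗ α(m), and ℤ[M ⊕_P M] → ℤ[(M ⊕_P M)^rep] is induced by the canonical map M ⊕_P M → (M ⊕_P M)^rep. Let ε : C → A be the augmentation induced by the multiplication A ⊗_R A → A and by α composed with the pullback projection (M ⊕_P M)^rep → M, and let I = ker(ε). Then there is an isomorphism of A-modules Ω¹_{(A,M)|(R,P)} ≅ I/I². -/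

import Mathlib

open scoped TensorProduct

universe u

/-- `η : M →* G` exhibits the abelian group `G` as the group completion
(Grothendieck group) of the commutative monoid `M`. -/
def IsGroupCompletion {M G : Type u} [CommMonoid M] [CommGroup G]
    (η : M →* G) : Prop :=
  ∀ (H : Type u) [CommGroup H] (f : M →* H), ∃! g : G →* H, g.comp η = f

/-- `iM, iN` exhibit `Q` as the pushout in commutative monoids of the diagram
`M ← P → N` given by `f : P →* M` and `g : P →* N`. -/
def IsCommMonoidPushout {P M N Q : Type u} [CommMonoid P] [CommMonoid M]
    [CommMonoid N] [CommMonoid Q] (f : P →* M) (g : P →* N)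
    (iM : M →* Q) (iN : N →* Q) : Prop :=
  iM.comp f = iN.comp g ∧
    ∀ (H : Type u) [CommMonoid H] (jM : M →* H) (jN : N →* H),
      jM.comp f = jN.comp g → ∃! h : Q →* H, h.comp iM = jM ∧ h.comp iN = jN

/-- The pullback of two monoid homomorphisms `f : X →* Z` and `g : Y →* Z`:
the submonoid `{(x, y) : f x = g y}` of `X × Y`. -/
def pullbackSubmonoid {X Y Z : Type u} [CommMonoid X] [CommMonoid Y]
    [CommMonoid Z] (f : X →* Z) (g : Y →* Z) : Submonoid (X × Y) where
  carrier := {x | f x.1 = g x.2}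
  one_mem' := by simp
  mul_mem' := by
    intro a b ha hb
    simp only [Set.mem_setOf_eq, Prod.fst_mul, Prod.snd_mul, map_mul] at *
    rw [ha, hb]

/-- The module of log Kähler differentials `Ω¹_{(A,M)|(R,P)}` of a map
`(f, f♭) : (R, P) → (A, M)` of pre-log rings: the quotient of
`Ω¹_{A|R} × (A ⊗_ℤ M^gp)` by the `A`-submodule generated by the elements
`(d(α m), −α(m) ⊗ η(m))` for `m ∈ M` and `(0, 1 ⊗ η(f♭ p))` for `p ∈ P`. -/
def LogKaehler (R A P M Mgp : Type u) [CommRing R] [CommRing A] [Algebra R A]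
    [CommMonoid P] [CommMonoid M] [CommGroup Mgp]
    (α : M →* A) (fb : P →* M) (η : M →* Mgp) : Type u :=
  (Ω[A⁄R] × (A ⊗[ℤ] Additive Mgp)) ⧸
    (Submodule.span A
      (Set.range (fun m : M =>
          ((KaehlerDifferential.D R A (α m),
            -(α m ⊗ₜ[ℤ] Additive.ofMul (η m))) : Ω[A⁄R] × (A ⊗[ℤ] Additive Mgp))) ∪
        Set.range (fun p : P =>
          ((0, (1 : A) ⊗ₜ[ℤ] Additive.ofMul (η (fb p))) :
            Ω[A⁄R] × (A ⊗[ℤ] Additive Mgp)))))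

noncomputable instance (R A P M Mgp : Type u) [CommRing R] [CommRing A]
    [Algebra R A] [CommMonoid P] [CommMonoid M] [CommGroup Mgp]
    (α : M →* A) (fb : P →* M) (η : M →* Mgp) :
    AddCommGroup (LogKaehler R A P M Mgp α fb η) := by
  delta LogKaehler; infer_instance

noncomputable instance (R A P M Mgp : Type u) [CommRing R] [CommRing A]
    [Algebra R A] [CommMonoid P] [CommMonoid M] [CommGroup Mgp]
    (α : M →* A) (fb : P →* M) (η : M →* Mgp) :
    Module A (LogKaehler R A P M Mgp α fb η) := by
  delta LogKaehler; infer_instance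

/-!
The two copies of `M` in `(M ⊕_P M)^gp` differ by `M^gp / P^gp`, so the repletion of the codiagonal
is `M × M^gp / P^gp`. As an `A`-algebra via its left factor, `C` therefore corepresents log twists:
pairs of a second ring map `v : A → T` under `R` and a homomorphism `γ : M^gp / P^gp → T^×` with
`v ∘ α = α * (γ ∘ η)`. Log twists in a trivial square-zero extension `A ⊕ N` reducing to `(id, 1)`
modulo `N` are the pairs `(id + d, 1 + dlog)` with `(d, dlog)` a log derivation into `N`, so they
are classified by linear maps `Ω¹_log → N`. On the other hand, augmented `A`-algebra maps
`C → A ⊕ N` are classified by linear maps `I / I² → N`, and the isomorphism follows from the Yoneda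
lemma.
-/

section UniversalProperties

variable {P M N Q G : Type u} [CommMonoid P] [CommMonoid M] [CommMonoid N] [CommMonoid Q]
  [CommGroup G]

theorem IsGroupCompletion.hom_ext {η : M →* G} (hη : IsGroupCompletion η) {H : Type u}
    [CommGroup H] {f g : G →* H} (h : ∀ m, f (η m) = g (η m)) : f = g :=
  (hη H (g.comp η)).unique (MonoidHom.ext h) rfl

theorem IsGroupCompletion.exists_lift {η : M →* G} (hη : IsGroupCompletion η) {H : Type u}
    [CommGroup H] (f : M →* H) : ∃ g : G →* H, ∀ m, g (η m) = f m :=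
  let ⟨g, hg, _⟩ := hη H f
  ⟨g, DFunLike.congr_fun hg⟩

theorem IsCommMonoidPushout.hom_ext {f : P →* M} {g : P →* N} {iM : M →* Q} {iN : N →* Q}
    (hQ : IsCommMonoidPushout f g iM iN) {H : Type u} [CommMonoid H] {a b : Q →* H}
    (hM : ∀ m, a (iM m) = b (iM m)) (hN : ∀ n, a (iN n) = b (iN n)) : a = b := by
  refine (hQ.2 H (b.comp iM) (b.comp iN) ?_).unique
    ⟨MonoidHom.ext hM, MonoidHom.ext hN⟩ ⟨rfl, rfl⟩
  rw [MonoidHom.comp_assoc, MonoidHom.comp_assoc, hQ.1]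

theorem IsCommMonoidPushout.exists_desc {f : P →* M} {g : P →* N} {iM : M →* Q} {iN : N →* Q}
    (hQ : IsCommMonoidPushout f g iM iN) {H : Type u} [CommMonoid H] (jM : M →* H) (jN : N →* H)
    (h : ∀ p, jM (f p) = jN (g p)) :
    ∃ k : Q →* H, (∀ m, k (iM m) = jM m) ∧ ∀ n, k (iN n) = jN n :=
  let ⟨k, hk, _⟩ := hQ.2 H jM jN (MonoidHom.ext h)
  ⟨k, DFunLike.congr_fun hk.1, DFunLike.congr_fun hk.2⟩

theorem IsCommMonoidPushout.gp_hom_ext {f : P →* M} {g : P →* N} {iM : M →* Q} {iN : N →* Q}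
    (hQ : IsCommMonoidPushout f g iM iN) {ηQ : Q →* G} (hηQ : IsGroupCompletion ηQ) {H : Type u}
    [CommGroup H] {a b : G →* H} (hM : ∀ m, a (ηQ (iM m)) = b (ηQ (iM m)))
    (hN : ∀ n, a (ηQ (iN n)) = b (ηQ (iN n))) : a = b :=
  hηQ.hom_ext <| DFunLike.congr_fun <|
    hQ.hom_ext (a := a.comp ηQ) (b := b.comp ηQ) hM hN

end UniversalProperties

section Repletion

variable {P M Q Mgp Qgp : Type u} [CommMonoid P] [CommMonoid M] [CommMonoid Q]
  [CommGroup Mgp] [CommGroup Qgp]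

/-- The relative group completion `M^gp / P^gp`, with the image of `P^gp` encoded as the subgroup
generated by the image of `P`. -/
abbrev RelativeGp (fb : P →* M) (η : M →* Mgp) : Type u :=
  Mgp ⧸ Subgroup.closure (Set.range (η.comp fb))

theorem RelativeGp.mk_map_base (fb : P →* M) (η : M →* Mgp) (p : P) :
    (η (fb p) : RelativeGp fb η) = 1 :=
  (QuotientGroup.eq_one_iff _).2 (Subgroup.subset_closure ⟨p, rfl⟩)

/-- The homomorphism out of `M^gp / P^gp` induced by one out of `M^gp` that is trivial on `P`. -/
def RelativeGp.lift {fb : P →* M} {η : M →* Mgp} {H : Type*} [Monoid H] (φ : Mgp →* H)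
    (hφ : ∀ p, φ (η (fb p)) = 1) : RelativeGp fb η →* H :=
  QuotientGroup.lift _ φ <| (Subgroup.closure_le _).2 <| Set.range_subset_iff.2 hφ

variable {fb : P →* M} {i₁ i₂ : M →* Q} {η : M →* Mgp} {ηQ : Q →* Qgp} {μgp : Qgp →* Mgp}

/-- A class `j₁ x * (j₂ y / j₁ y)` of `(M ⊕_P M)^gp` corresponds to `(x, [y])`, where `j₁` and `j₂`
are the group completions of the two inclusions. -/
theorem exists_pushoutGp_mulEquiv (hQ : IsCommMonoidPushout fb fb i₁ i₂)
    (hη : IsGroupCompletion η) (hηQ : IsGroupCompletion ηQ)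
    (hμ₁ : ∀ m, μgp (ηQ (i₁ m)) = η m) (hμ₂ : ∀ m, μgp (ηQ (i₂ m)) = η m) :
    ∃ e : Qgp ≃* Mgp × RelativeGp fb η,
      (∀ q, (e q).1 = μgp q) ∧ (∀ m, (e (ηQ (i₁ m))).2 = 1) ∧ ∀ m, (e (ηQ (i₂ m))).2 = η m := by
  obtain ⟨j₁, hj₁⟩ := hη.exists_lift (ηQ.comp i₁)
  obtain ⟨j₂, hj₂⟩ := hη.exists_lift (ηQ.comp i₂)
  obtain ⟨c₀, hc₁, hc₂⟩ := hQ.exists_desc 1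
    ((QuotientGroup.mk' (Subgroup.closure (Set.range (η.comp fb)))).comp η)
    fun p => (RelativeGp.mk_map_base fb η p).symm
  obtain ⟨c, hc⟩ := hηQ.exists_lift c₀
  have hbase (p) : (j₂ / j₁) (η (fb p)) = 1 := by
    have : i₁ (fb p) = i₂ (fb p) := DFunLike.congr_fun hQ.1 p
    simp [hj₁, hj₂, this]
  have hμj₁ : ∀ x, μgp (j₁ x) = x := DFunLike.congr_fun
    (hη.hom_ext (f := μgp.comp j₁) (g := .id Mgp) (by simp [hj₁, hμ₁]))
  have hμj₂ : ∀ x, μgp (j₂ x) = x := DFunLike.congr_fun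
    (hη.hom_ext (f := μgp.comp j₂) (g := .id Mgp) (by simp [hj₂, hμ₂]))
  have hcj₁ : ∀ x, c (j₁ x) = 1 := DFunLike.congr_fun
    (hη.hom_ext (f := c.comp j₁) (g := 1) (by simp [hj₁, hc, hc₁]))
  have hcj₂ : ∀ x, c (j₂ x) = x := DFunLike.congr_fun
    (hη.hom_ext (f := c.comp j₂) (g := QuotientGroup.mk' _) (by simp [hj₂, hc, hc₂]))
  refine ⟨(μgp.prod c).toMulEquiv (j₁.coprod (RelativeGp.lift (j₂ / j₁) hbase)) ?_ ?_,
    fun _ => rfl, fun m => (hc _).trans (hc₁ m), fun m => (hc _).trans (hc₂ m)⟩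
  · refine hQ.gp_hom_ext hηQ (fun m => ?_) fun m => ?_
    · simp [hμ₁, hc, hc₁, hj₁]
    · simp [hμ₂, hc, hc₂, hj₁, hj₂, RelativeGp.lift]
  · refine MonoidHom.ext fun ⟨x, y⟩ => ?_
    induction y using QuotientGroup.induction_on with
    | H y => simp [RelativeGp.lift, hμj₁, hμj₂, hcj₁, hcj₂]

theorem exists_repletion_mulEquiv (hQ : IsCommMonoidPushout fb fb i₁ i₂)
    (hη : IsGroupCompletion η) (hηQ : IsGroupCompletion ηQ)
    (hμ₁ : ∀ m, μgp (ηQ (i₁ m)) = η m) (hμ₂ : ∀ m, μgp (ηQ (i₂ m)) = η m) :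
    ∃ e : pullbackSubmonoid η μgp ≃* M × RelativeGp fb η,
      (∀ x, (e x).1 = (x : M × Qgp).1) ∧
      (∀ (x : pullbackSubmonoid η μgp) m, (x : M × Qgp).2 = ηQ (i₁ m) → (e x).2 = 1) ∧
      ∀ (x : pullbackSubmonoid η μgp) m, (x : M × Qgp).2 = ηQ (i₂ m) → (e x).2 = η m := by
  obtain ⟨e, he, he₁, he₂⟩ := exists_pushoutGp_mulEquiv hQ hη hηQ hμ₁ hμ₂
  refine ⟨
    { toFun := fun x => ((x : M × Qgp).1, (e (x : M × Qgp).2).2)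
      invFun := fun y => ⟨(y.1, e.symm (η y.1, y.2)), ?_⟩
      left_inv := fun x => ?_
      right_inv := fun y => ?_
      map_mul' := fun x y => ?_ }, fun x => rfl, ?_, ?_⟩
  · change η y.1 = μgp _
    rw [← he, e.apply_symm_apply]
  · have hx : η (x : M × Qgp).1 = μgp (x : M × Qgp).2 := x.2
    ext
    · rfl
    · simp [hx, ← he]
  · simp
  · simp
  · rintro x m hx
    simp [hx, he₁]
  · rintro x m hx
    simp [hx, he₂]

end Repletion

section LogDerivation

variable {R A P M Mgp : Type u} [CommRing R] [CommRing A] [Algebra R A] [CommMonoid P]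
  [CommMonoid M] [CommGroup Mgp] {α : M →* A} {fb : P →* M} {η : M →* Mgp}

variable (R α fb η) in
/-- A log derivation of `(A, M)` over `(R, P)` with values in the `A`-module `N`. The additive part
`der` is a `ℤ`-derivation killing the image of `R`, so that `N` needs no `R`-module structure. -/
structure LogDerivation (N : Type*) [AddCommGroup N] [Module A N] where
  der : Derivation ℤ A N
  dlog : Additive Mgp →+ N
  der_algebraMap : ∀ r, der (algebraMap R A r) = 0
  der_chart : ∀ m, der (α m) = α m • dlog (.ofMul (η m))
  dlog_base : ∀ p, dlog (.ofMul (η (fb p))) = 0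

variable {N : Type*} [AddCommGroup N] [Module A N]

namespace LogDerivation

/-- The linear map on `Ω¹_{A|R}` classifying `D.der`. -/
noncomputable def kaehlerHom (D : LogDerivation R α fb η N) : Ω[A⁄R] →ₗ[A] N :=
  letI : Module R N := Module.compHom N (algebraMap R A)
  haveI : IsScalarTower R A N := .of_algebraMap_smul fun _ _ => rfl
  (Derivation.mk' (R := R)
    { D.der with
      map_smul' := fun r a => by
        simp [Algebra.smul_def, D.der_algebraMap] }
    D.der.leibniz).liftKaehlerDifferential

theorem kaehlerHom_D (D : LogDerivation R α fb η N) (a : A) :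
    D.kaehlerHom (KaehlerDifferential.D R A a) = D.der a :=
  letI : Module R N := Module.compHom N (algebraMap R A)
  haveI : IsScalarTower R A N := .of_algebraMap_smul fun _ _ => rfl
  Derivation.liftKaehlerDifferential_comp_D _ a

/-- The linear extension of `D.dlog` to `A ⊗ M^gp`. -/
noncomputable def tensorHom (D : LogDerivation R α fb η N) : A ⊗[ℤ] Additive Mgp →ₗ[A] N :=
  TensorProduct.AlgebraTensorModule.lift
    (LinearMap.toSpanSingleton A (Additive Mgp →ₗ[ℤ] N) D.dlog.toIntLinearMap)

theorem tensorHom_tmul (D : LogDerivation R α fb η N) (a : A) (x : Additive Mgp) :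
    D.tensorHom (a ⊗ₜ x) = a • D.dlog x :=
  rfl

end LogDerivation

namespace LogKaehler

variable (R α fb η) in
/-- The projection of `Ω¹_{A|R} × (A ⊗ M^gp)` onto the log Kähler differentials. -/
noncomputable def mk : Ω[A⁄R] × (A ⊗[ℤ] Additive Mgp) →ₗ[A] LogKaehler R A P M Mgp α fb η :=
  Submodule.mkQ _

theorem mk_D_chart (m : M) :
    mk R α fb η (KaehlerDifferential.D R A (α m), 0) = mk R α fb η (0, α m ⊗ₜ .ofMul (η m)) := by
  rw [← sub_eq_zero, ← map_sub, Prod.mk_sub_mk, sub_zero, zero_sub]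
  exact (Submodule.Quotient.mk_eq_zero _).2 (Submodule.subset_span (.inl ⟨m, rfl⟩))

theorem mk_base (p : P) : mk R α fb η (0, 1 ⊗ₜ .ofMul (η (fb p))) = 0 :=
  (Submodule.Quotient.mk_eq_zero _).2 (Submodule.subset_span (.inr ⟨p, rfl⟩))

variable (R α fb η) in
/-- The universal log derivation. -/
noncomputable def universal : LogDerivation R α fb η (LogKaehler R A P M Mgp α fb η) where
  der := (mk R α fb η ∘ₗ LinearMap.inl A _ _).compDer
    ((KaehlerDifferential.D R A).restrictScalars ℤ)
  dlog := ((mk R α fb η ∘ₗ LinearMap.inr A _ _).toAddMonoidHom).comp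
    (TensorProduct.mk ℤ A (Additive Mgp) 1).toAddMonoidHom
  der_algebraMap r := by
    change mk R α fb η (KaehlerDifferential.D R A (algebraMap R A r), 0) = 0
    rw [Derivation.map_algebraMap]
    exact map_zero _
  der_chart m := by
    simpa [TensorProduct.smul_tmul', ← map_smul] using mk_D_chart m
  dlog_base p := mk_base p

theorem hom_ext {F G : LogKaehler R A P M Mgp α fb η →ₗ[A] N}
    (hder : ∀ a, F ((universal R α fb η).der a) = G ((universal R α fb η).der a))
    (hdlog : ∀ x, F ((universal R α fb η).dlog x) = G ((universal R α fb η).dlog x)) : F = G := by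
  refine Submodule.linearMap_qext _ (LinearMap.prod_ext ?_ ?_)
  · exact LinearMap.ext_on (KaehlerDifferential.span_range_derivation R A)
      (Set.forall_mem_range.2 hder)
  · exact TensorProduct.AlgebraTensorModule.curry_injective
      (LinearMap.ext_ring (LinearMap.ext hdlog))

/-- The linear map classifying a log derivation. -/
noncomputable def lift (D : LogDerivation R α fb η N) : LogKaehler R A P M Mgp α fb η →ₗ[A] N :=
  Submodule.liftQ _ (D.kaehlerHom.coprod D.tensorHom) <| Submodule.span_le.2 <| by
    rintro _ (⟨m, rfl⟩ | ⟨p, rfl⟩)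
    · simp [D.kaehlerHom_D, D.tensorHom_tmul, D.der_chart]
    · simp [D.tensorHom_tmul, D.dlog_base]

theorem lift_der (D : LogDerivation R α fb η N) (a : A) :
    lift D ((universal R α fb η).der a) = D.der a := by
  change D.kaehlerHom (KaehlerDifferential.D R A a) + D.tensorHom 0 = _
  rw [D.kaehlerHom_D, map_zero, add_zero]

theorem lift_dlog (D : LogDerivation R α fb η N) (x : Additive Mgp) :
    lift D ((universal R α fb η).dlog x) = D.dlog x := by
  change D.kaehlerHom 0 + D.tensorHom (1 ⊗ₜ x) = _
  rw [D.tensorHom_tmul, map_zero, zero_add, one_smul]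

end LogKaehler

end LogDerivation

section LogTwist

variable {R A P M Mgp : Type u} [CommRing R] [CommRing A] [Algebra R A] [CommMonoid P]
  [CommMonoid M] [CommGroup Mgp] {α : M →* A} {fb : P →* M} {η : M →* Mgp}

variable (R α fb η) in
/-- A log twist of `(A, M)` over `(R, P)` in the `A`-algebra `T`: a second map `(A, M) → T` whose
ratio to the structure map is multiplicatively recorded by `γ` on `M^gp`. -/
structure IsLogTwist {T : Type u} [CommRing T] [Algebra A T] (v : A →+* T) (γ : Mgp →* T) :
    Prop where
  map_algebraMap : ∀ r, v (algebraMap R A r) = algebraMap A T (algebraMap R A r)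
  map_chart : ∀ m, v (α m) = algebraMap A T (α m) * γ (η m)
  map_base : ∀ p, γ (η (fb p)) = 1

variable (R α fb η) in
/-- The log twist `(v, γ)` in `C` is universal: `C` corepresents log twists in `A`-algebras. -/
structure IsUniversalLogTwist {C : Type u} [CommRing C] [Algebra A C] (v : A →+* C)
    (γ : Mgp →* C) : Prop extends IsLogTwist R α fb η v γ where
  exists_lift : ∀ (T : Type u) [CommRing T] [Algebra A T] (v' : A →+* T) (γ' : Mgp →* T),
    IsLogTwist R α fb η v' γ' →
      ∃ Φ : C →ₐ[A] T, (∀ a, Φ (v a) = v' a) ∧ ∀ x, Φ (γ x) = γ' x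
  hom_ext : ∀ {T : Type u} [CommRing T] [Algebra A T] {Φ Ψ : C →ₐ[A] T},
    (∀ a, Φ (v a) = Ψ (v a)) → (∀ x, Φ (γ x) = Ψ (γ x)) → Φ = Ψ

open TrivSqZeroExt (inl inr)

variable {N : Type u} [AddCommGroup N] [Module A N] [Module Aᵐᵒᵖ N] [IsCentralScalar A N]

namespace LogDerivation

/-- The ring homomorphism `a ↦ a + D a` to the trivial square-zero extension. -/
def twistHom (D : LogDerivation R α fb η N) : A →+* TrivSqZeroExt A N where
  toFun a := inl a + inr (D.der a)
  map_one' := by simp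
  map_mul' a b := by ext <;> simp
  map_zero' := by simp
  map_add' a b := by ext <;> simp

/-- The homomorphism `x ↦ 1 + dlog x` to the trivial square-zero extension. -/
def twistUnit (D : LogDerivation R α fb η N) : Mgp →* TrivSqZeroExt A N where
  toFun x := 1 + inr (D.dlog (.ofMul x))
  map_one' := by simp
  map_mul' x y := by ext <;> simp [add_comm]

theorem isLogTwist (D : LogDerivation R α fb η N) :
    IsLogTwist R α fb η D.twistHom D.twistUnit where
  map_algebraMap r := by
    ext <;> simp [twistHom, D.der_algebraMap, TrivSqZeroExt.algebraMap_eq_inl]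
  map_chart m := by
    ext <;> simp [twistHom, twistUnit, D.der_chart, TrivSqZeroExt.algebraMap_eq_inl]
  map_base p := by simp [twistUnit, D.dlog_base]

end LogDerivation

end LogTwist

section Conormal

variable {A C : Type u} [CommRing A] [CommRing C] [Algebra A C] (ε : C →ₐ[A] A)

/-- The projection `c ↦ c - ε c` of an augmented algebra onto its augmentation ideal. -/
def kerProj : C →ₗ[A] RingHom.ker ε where
  toFun c := ⟨c - algebraMap A C (ε c), by simp [RingHom.mem_ker]⟩
  map_add' x y := Subtype.ext <| by simp [add_sub_add_comm]
  map_smul' a x := Subtype.ext <| by simp [Algebra.smul_def, mul_sub]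

theorem kerProj_of_mem (x : RingHom.ker ε) : kerProj ε x = x :=
  Subtype.ext <| by simp [kerProj, RingHom.mem_ker.1 x.2]

theorem kerProj_mul (x y : C) : kerProj ε (x * y) = x • kerProj ε y + ε y • kerProj ε x :=
  Subtype.ext <| by
    change x * y - algebraMap A C (ε (x * y)) =
      x * (y - algebraMap A C (ε y)) + ε y • (x - algebraMap A C (ε x))
    rw [Algebra.smul_def, map_mul, map_mul]
    ring

/-- The projection `c ↦ [c - ε c]` of an augmented algebra to the conormal module of its
augmentation. -/
def conormalProj : C →ₗ[A] (RingHom.ker ε).Cotangent :=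
  (RingHom.ker ε).toCotangent.restrictScalars A ∘ₗ kerProj ε

theorem conormalProj_of_mem_ker (x : RingHom.ker ε) :
    conormalProj ε x = (RingHom.ker ε).toCotangent x :=
  congrArg _ (kerProj_of_mem ε x)

theorem conormalProj_algebraMap (a : A) : conormalProj ε (algebraMap A C a) = 0 := by
  have : kerProj ε (algebraMap A C a) = 0 := Subtype.ext <| by simp [kerProj]
  simp [conormalProj, this]

theorem conormalProj_one : conormalProj ε 1 = 0 := by
  simpa using conormalProj_algebraMap ε 1

theorem smul_cotangent_ker (c : C) (t : (RingHom.ker ε).Cotangent) : c • t = ε c • t := by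
  rw [← algebraMap_smul C (ε c) t, ← sub_eq_zero, ← sub_smul]
  exact Ideal.Cotangent.smul_eq_zero_of_mem (by simp [RingHom.mem_ker]) t

theorem conormalProj_mul (x y : C) :
    conormalProj ε (x * y) = ε x • conormalProj ε y + ε y • conormalProj ε x := by
  rw [← smul_cotangent_ker ε x]
  simp [conormalProj, kerProj_mul]

variable {ε} {N : Type*} [AddCommGroup N] [Module A N] [Module Aᵐᵒᵖ N] [IsCentralScalar A N]

/-- The augmented algebra map `C → C / I² = A ⊕ I / I² → A ⊕ N` induced by a linear map
`I / I² → N`. -/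
def conormalHom (F : (RingHom.ker ε).Cotangent →ₗ[A] N) : C →ₐ[A] TrivSqZeroExt A N where
  toFun c := .inl (ε c) + .inr (F (conormalProj ε c))
  map_one' := by simp [conormalProj_one]
  map_mul' x y := by ext <;> simp [conormalProj_mul]
  map_zero' := by simp
  map_add' x y := by ext <;> simp
  commutes' a := by simp [conormalProj_algebraMap, TrivSqZeroExt.algebraMap_eq_inl]

theorem conormalHom_apply (F : (RingHom.ker ε).Cotangent →ₗ[A] N) (c : C) :
    conormalHom F c = .inl (ε c) + .inr (F (conormalProj ε c)) :=
  rfl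

/-- The linear map `I / I² → N` induced by an augmented algebra map `C → A ⊕ N`. -/
noncomputable def conormalLift (Φ : C →ₐ[A] TrivSqZeroExt A N) (hΦ : ∀ c, (Φ c).fst = ε c) :
    (RingHom.ker ε).Cotangent →ₗ[A] N :=
  Ideal.Cotangent.lift
    (TrivSqZeroExt.sndHom A N ∘ₗ Φ.toLinearMap ∘ₗ (RingHom.ker ε).subtype.restrictScalars A)
    fun x y => by simp [hΦ, RingHom.mem_ker.1 x.2, RingHom.mem_ker.1 y.2]

theorem conormalLift_conormalProj (Φ : C →ₐ[A] TrivSqZeroExt A N) (hΦ : ∀ c, (Φ c).fst = ε c)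
    (c : C) : conormalLift Φ hΦ (conormalProj ε c) = (Φ c).snd := by
  change (Φ (c - algebraMap A C (ε c))).snd = _
  simp [TrivSqZeroExt.algebraMap_eq_inl]

end Conormal

section Comparison

variable {R A P M Mgp : Type u} [CommRing R] [CommRing A] [Algebra R A] [CommMonoid P]
  [CommMonoid M] [CommGroup Mgp] {α : M →* A} {fb : P →* M} {η : M →* Mgp}
  {C : Type u} [CommRing C] [Algebra A C] {v : A →+* C} {γ : Mgp →* C}

/-- The log derivation with values in the conormal module of an augmentation under which the log
twist `(v, γ)` becomes trivial. -/
def IsLogTwist.conormalDerivation (h : IsLogTwist R α fb η v γ) (ε : C →ₐ[A] A)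
    (hεv : ∀ a, ε (v a) = a) (hεγ : ∀ x, ε (γ x) = 1) :
    LogDerivation R α fb η (RingHom.ker ε).Cotangent where
  der := Derivation.mk'
    ((conormalProj ε).toAddMonoidHom.comp v.toAddMonoidHom).toIntLinearMap
    fun a b => by simp [conormalProj_mul, hεv]
  dlog :=
    { toFun := fun x => conormalProj ε (γ x.toMul)
      map_zero' := by simp [conormalProj_one]
      map_add' := fun x y => by simp [conormalProj_mul, hεγ, add_comm] }
  der_algebraMap r := by simp [h.map_algebraMap, conormalProj_algebraMap]
  der_chart m := by simp [h.map_chart, conormalProj_mul, conormalProj_algebraMap]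
  dlog_base p := by simp [h.map_base, conormalProj_one]

namespace IsUniversalLogTwist

variable {N : Type u} [AddCommGroup N] [Module A N]

theorem exists_conormal_lift (h : IsUniversalLogTwist R α fb η v γ) {ε : C →ₐ[A] A}
    (hεv : ∀ a, ε (v a) = a) (hεγ : ∀ x, ε (γ x) = 1) (D : LogDerivation R α fb η N) :
    ∃ G : (RingHom.ker ε).Cotangent →ₗ[A] N,
      (∀ a, G (conormalProj ε (v a)) = D.der a) ∧
      ∀ x, G (conormalProj ε (γ x)) = D.dlog (.ofMul x) := by
  let : Module Aᵐᵒᵖ N := .compHom _ ((RingHom.id A).fromOpposite mul_comm)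
  have : IsCentralScalar A N := ⟨fun _ _ => rfl⟩
  obtain ⟨Φ, hΦv, hΦγ⟩ := h.exists_lift _ _ _ D.isLogTwist
  have hfst : (TrivSqZeroExt.fstHom A A N).comp Φ = ε :=
    h.hom_ext (by simp [hΦv, hεv, LogDerivation.twistHom])
      (by simp [hΦγ, hεγ, LogDerivation.twistUnit])
  have hΦ (c) : (Φ c).fst = ε c := DFunLike.congr_fun hfst c
  refine ⟨conormalLift Φ hΦ, fun a => ?_, fun x => ?_⟩
  · simp [conormalLift_conormalProj, hΦv, LogDerivation.twistHom]
  · simp [conormalLift_conormalProj, hΦγ, LogDerivation.twistUnit]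

theorem conormal_hom_ext (h : IsUniversalLogTwist R α fb η v γ) {ε : C →ₐ[A] A}
    {F G : (RingHom.ker ε).Cotangent →ₗ[A] N}
    (hv : ∀ a, F (conormalProj ε (v a)) = G (conormalProj ε (v a)))
    (hγ : ∀ x, F (conormalProj ε (γ x)) = G (conormalProj ε (γ x))) : F = G := by
  let : Module Aᵐᵒᵖ N := .compHom _ ((RingHom.id A).fromOpposite mul_comm)
  have : IsCentralScalar A N := ⟨fun _ _ => rfl⟩
  have hFG : conormalHom F = conormalHom G :=
    h.hom_ext (fun a => by simp [conormalHom_apply, hv]) (fun x => by simp [conormalHom_apply, hγ])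
  refine LinearMap.ext fun t => ?_
  obtain ⟨c, rfl⟩ := Ideal.toCotangent_surjective _ t
  rw [← conormalProj_of_mem_ker]
  simpa [conormalHom_apply] using congrArg TrivSqZeroExt.snd (DFunLike.congr_fun hFG (c : C))

theorem nonempty_logKaehler_equiv (h : IsUniversalLogTwist R α fb η v γ) (ε : C →ₐ[A] A)
    (hεv : ∀ a, ε (v a) = a) (hεγ : ∀ x, ε (γ x) = 1) :
    Nonempty (LogKaehler R A P M Mgp α fb η ≃ₗ[A] (RingHom.ker ε).Cotangent) := by
  let F := LogKaehler.lift (h.toIsLogTwist.conormalDerivation ε hεv hεγ)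
  have hFder (a) : F ((LogKaehler.universal R α fb η).der a) = conormalProj ε (v a) :=
    LogKaehler.lift_der _ a
  have hFdlog (x) : F ((LogKaehler.universal R α fb η).dlog x) = conormalProj ε (γ x.toMul) :=
    LogKaehler.lift_dlog _ x
  obtain ⟨G, hGv, hGγ⟩ := h.exists_conormal_lift hεv hεγ (LogKaehler.universal R α fb η)
  refine ⟨.ofLinearMap F G (h.conormal_hom_ext (fun a => ?_) fun x => ?_)
    (LogKaehler.hom_ext (fun a => ?_) fun x => ?_)⟩
  · simp [hGv, hFder]
  · simp [hGγ, hFdlog]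
  · simp [hGv, hFder]
  · simp [hGγ, hFdlog]

end IsUniversalLogTwist

end Comparison

section PushoutRing

theorem exists_ringHom_tensorProduct {S A B T : Type*} [CommRing S] [CommRing A] [CommRing B]
    [CommRing T] [Algebra S A] [Algebra S B] (g₁ : A →+* T) (g₂ : B →+* T)
    (h : ∀ s, g₁ (algebraMap S A s) = g₂ (algebraMap S B s)) :
    ∃ g : A ⊗[S] B →+* T, ∀ a b, g (a ⊗ₜ b) = g₁ a * g₂ b := by
  let : Algebra S T := (g₁.comp (algebraMap S A)).toAlgebra
  let G₁ : A →ₐ[S] T := { g₁ with commutes' := fun _ => rfl }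
  let G₂ : B →ₐ[S] T := { g₂ with commutes' := fun s => (h s).symm }
  exact ⟨Algebra.TensorProduct.productMap G₁ G₂, Algebra.TensorProduct.productMap_apply_tmul G₁ G₂⟩

open MonoidAlgebra (single)

variable {R A P M Q W Mgp : Type u} [CommRing R] [CommRing A] [Algebra R A] [CommMonoid P]
  [CommMonoid M] [CommMonoid Q] [CommMonoid W] [CommGroup Mgp] {α : M →* A} {fb : P →* M}
  {η : M →* Mgp} {i₁ i₂ : M →* Q} {ρ : Q →* W}
  [Algebra (MonoidAlgebra ℤ Q) (A ⊗[R] A)] [Algebra (MonoidAlgebra ℤ Q) (MonoidAlgebra ℤ W)]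

variable (R A Q W) in
/-- The ring `C = (A ⊗_R A) ⊗_{ℤ[Q]} ℤ[W]`, used with `Q = M ⊕_P M` and `W` its repletion. -/
abbrev RepleteTensor : Type u := (A ⊗[R] A) ⊗[MonoidAlgebra ℤ Q] MonoidAlgebra ℤ W

namespace RepleteTensor

variable (R A Q W) in
/-- The structure map `a ↦ (a ⊗ 1) ⊗ 1` of `C` as an `A`-algebra. -/
noncomputable def inclLeft : A →+* RepleteTensor R A Q W :=
  Algebra.TensorProduct.includeLeftRingHom.comp Algebra.TensorProduct.includeLeftRingHom

variable (R A Q W) in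
/-- The second copy `a ↦ (1 ⊗ a) ⊗ 1` of `A` in `C`. -/
noncomputable def inclRight : A →+* RepleteTensor R A Q W :=
  Algebra.TensorProduct.includeLeftRingHom.comp Algebra.TensorProduct.includeRight.toRingHom

variable (R A Q W) in
/-- The monoid homomorphism `w ↦ (1 ⊗ 1) ⊗ w` from `W` to `C`. -/
noncomputable def ofRepletion : W →* RepleteTensor R A Q W :=
  (Algebra.TensorProduct.includeRight :
    MonoidAlgebra ℤ W →ₐ[MonoidAlgebra ℤ Q] RepleteTensor R A Q W).toMonoidHom.comp
      (MonoidAlgebra.of ℤ W)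

variable (R A Q) in
/-- The homomorphism `x ↦ 1 ⊗ (1, [x])` from `M^gp` to `C`, given an identification
`W ≅ M × M^gp / P^gp`. -/
noncomputable def unitOfGp (e : W ≃* M × RelativeGp fb η) : Mgp →* RepleteTensor R A Q W :=
  ((ofRepletion R A Q W).comp e.symm.toMonoidHom).comp <|
    (MonoidHom.inr M (RelativeGp fb η)).comp (QuotientGroup.mk' _)

theorem ringHom_ext {T : Type*} [CommRing T] {f g : RepleteTensor R A Q W →+* T}
    (hleft : ∀ a, f (inclLeft R A Q W a) = g (inclLeft R A Q W a))
    (hright : ∀ a, f (inclRight R A Q W a) = g (inclRight R A Q W a))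
    (hrep : ∀ w, f (ofRepletion R A Q W w) = g (ofRepletion R A Q W w)) : f = g := by
  refine Algebra.TensorProduct.ringHom_ext ?_ ?_
  · exact Algebra.TensorProduct.ringHom_ext (RingHom.ext hleft) (RingHom.ext hright)
  · exact MonoidAlgebra.ringHom_ext' (Subsingleton.elim _ _) (MonoidHom.ext hrep)

theorem algebraMap_tmul_one {q : Q} {w : W}
    (hχ : algebraMap (MonoidAlgebra ℤ Q) (MonoidAlgebra ℤ W) (single q 1) = single w 1) :
    (algebraMap (MonoidAlgebra ℤ Q) (A ⊗[R] A) (single q 1) ⊗ₜ 1 : RepleteTensor R A Q W) =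
      ofRepletion R A Q W w := by
  rw [← Algebra.TensorProduct.algebraMap_apply, Algebra.TensorProduct.algebraMap_apply', hχ]
  rfl

theorem ofRepletion_eq_inclLeft {q : Q} {w : W} {a : A}
    (hχ : algebraMap (MonoidAlgebra ℤ Q) (MonoidAlgebra ℤ W) (single q 1) = single w 1)
    (hθ : algebraMap (MonoidAlgebra ℤ Q) (A ⊗[R] A) (single q 1) = a ⊗ₜ 1) :
    ofRepletion R A Q W w = inclLeft R A Q W a := by
  rw [← algebraMap_tmul_one hχ, hθ]
  rfl

theorem ofRepletion_eq_inclRight {q : Q} {w : W} {a : A}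
    (hχ : algebraMap (MonoidAlgebra ℤ Q) (MonoidAlgebra ℤ W) (single q 1) = single w 1)
    (hθ : algebraMap (MonoidAlgebra ℤ Q) (A ⊗[R] A) (single q 1) = 1 ⊗ₜ a) :
    ofRepletion R A Q W w = inclRight R A Q W a := by
  rw [← algebraMap_tmul_one hχ, hθ]
  rfl

theorem inclRight_algebraMap (r : R) :
    inclRight R A Q W (algebraMap R A r) = inclLeft R A Q W (algebraMap R A r) := by
  change ((1 : A) ⊗ₜ algebraMap R A r) ⊗ₜ 1 = (algebraMap R A r ⊗ₜ (1 : A)) ⊗ₜ 1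
  rw [← Algebra.TensorProduct.algebraMap_apply', Algebra.TensorProduct.algebraMap_apply]

theorem exists_desc {T : Type u} [CommRing T] (hQ : IsCommMonoidPushout fb fb i₁ i₂)
    (hχ : ∀ q, algebraMap (MonoidAlgebra ℤ Q) (MonoidAlgebra ℤ W) (single q 1) = single (ρ q) 1)
    (hθ₁ : ∀ m, algebraMap (MonoidAlgebra ℤ Q) (A ⊗[R] A) (single (i₁ m) 1) = α m ⊗ₜ 1)
    (hθ₂ : ∀ m, algebraMap (MonoidAlgebra ℤ Q) (A ⊗[R] A) (single (i₂ m) 1) = 1 ⊗ₜ α m)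
    {g₁ g₂ : A →+* T} {k : W →* T} (hR : ∀ r, g₁ (algebraMap R A r) = g₂ (algebraMap R A r))
    (hk₁ : ∀ m, k (ρ (i₁ m)) = g₁ (α m)) (hk₂ : ∀ m, k (ρ (i₂ m)) = g₂ (α m)) :
    ∃ Φ : RepleteTensor R A Q W →+* T, (∀ a, Φ (inclLeft R A Q W a) = g₁ a) ∧
      (∀ a, Φ (inclRight R A Q W a) = g₂ a) ∧ ∀ w, Φ (ofRepletion R A Q W w) = k w := by
  obtain ⟨g, hg⟩ := exists_ringHom_tensorProduct g₁ g₂ hR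
  let b : MonoidAlgebra ℤ W →+* T := (MonoidAlgebra.lift ℤ T W k).toRingHom
  have hb (w) : b (single w 1) = k w := by simp [b]
  have hgk : ∀ q, g (algebraMap (MonoidAlgebra ℤ Q) _ (single q 1)) = k (ρ q) :=
    DFunLike.congr_fun <| hQ.hom_ext
      (a := (g.comp (algebraMap (MonoidAlgebra ℤ Q) (A ⊗[R] A))).toMonoidHom.comp
        (MonoidAlgebra.of ℤ Q))
      (b := k.comp ρ) (by simp [hθ₁, hg, hk₁]) (by simp [hθ₂, hg, hk₂])
  have hgb : g.comp (algebraMap _ _) = b.comp (algebraMap (MonoidAlgebra ℤ Q) _) :=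
    MonoidAlgebra.ringHom_ext' (Subsingleton.elim _ _)
      (MonoidHom.ext fun q => by simp [hgk, hχ, hb])
  obtain ⟨Φ, hΦ⟩ := exists_ringHom_tensorProduct g b (DFunLike.congr_fun hgb)
  refine ⟨Φ, fun a => ?_, fun a => ?_, fun w => ?_⟩
  · exact (hΦ _ _).trans (by simp [hg])
  · exact (hΦ _ _).trans (by simp [hg])
  · exact (hΦ _ _).trans (by simp [hb])

theorem isUniversalLogTwist [Algebra A (RepleteTensor R A Q W)]
    (hA : algebraMap A (RepleteTensor R A Q W) = inclLeft R A Q W)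
    (hQ : IsCommMonoidPushout fb fb i₁ i₂)
    (hχ : ∀ q, algebraMap (MonoidAlgebra ℤ Q) (MonoidAlgebra ℤ W) (single q 1) = single (ρ q) 1)
    (hθ₁ : ∀ m, algebraMap (MonoidAlgebra ℤ Q) (A ⊗[R] A) (single (i₁ m) 1) = α m ⊗ₜ 1)
    (hθ₂ : ∀ m, algebraMap (MonoidAlgebra ℤ Q) (A ⊗[R] A) (single (i₂ m) 1) = 1 ⊗ₜ α m)
    {e : W ≃* M × RelativeGp fb η} (he₁ : ∀ m, e (ρ (i₁ m)) = (m, 1))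
    (he₂ : ∀ m, e (ρ (i₂ m)) = (m, ↑(η m))) :
    IsUniversalLogTwist R α fb η (inclRight R A Q W) (unitOfGp R A Q e) where
  map_algebraMap r := by rw [hA, inclRight_algebraMap]
  map_chart m := by
    have hρ : ρ (i₂ m) = ρ (i₁ m) * e.symm (1, η m) := e.injective (by simp [he₁, he₂])
    rw [hA, ← ofRepletion_eq_inclRight (hχ _) (hθ₂ m), ← ofRepletion_eq_inclLeft (hχ _) (hθ₁ m),
      hρ, map_mul]
    rfl
  map_base p := by
    change ofRepletion R A Q W (e.symm (1, η (fb p))) = 1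
    rw [RelativeGp.mk_map_base, ← Prod.one_eq_mk, map_one, map_one]
  exists_lift T _ _ v γ h := by
    let k : W →* T := ((algebraMap A T).toMonoidHom.comp α |>.coprod
      (RelativeGp.lift γ h.map_base)).comp e.toMonoidHom
    obtain ⟨Φ, hΦ₁, hΦ₂, hΦW⟩ := exists_desc hQ hχ hθ₁ hθ₂ (k := k)
      (fun r => (h.map_algebraMap r).symm) (fun m => by simp [k, he₁])
      (fun m => by simp [k, he₂, h.map_chart, RelativeGp.lift])
    refine ⟨{ Φ with commutes' := fun a => ?_ }, hΦ₂, fun x => ?_⟩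
    · exact (congrArg Φ (DFunLike.congr_fun hA a)).trans (hΦ₁ a)
    · exact (hΦW _).trans (by simp [k, RelativeGp.lift])
  hom_ext {T _ _ Φ Ψ} hv hγ := by
    have hleft (a) : Φ (inclLeft R A Q W a) = Ψ (inclLeft R A Q W a) := by
      rw [← hA, Φ.commutes, Ψ.commutes]
    have hrep (w) : Φ (ofRepletion R A Q W w) = Ψ (ofRepletion R A Q W w) := by
      obtain ⟨⟨m, y⟩, rfl⟩ := e.symm.surjective w
      obtain ⟨x, rfl⟩ := QuotientGroup.mk_surjective y
      have hw : e.symm (m, (x : RelativeGp fb η)) = ρ (i₁ m) * e.symm (1, x) :=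
        e.injective (by simp [he₁])
      have hx : ofRepletion R A Q W (e.symm (1, x)) = unitOfGp R A Q e x := rfl
      rw [hw, map_mul, map_mul, map_mul, hx, hγ, ofRepletion_eq_inclLeft (hχ _) (hθ₁ m), hleft]
    exact AlgHom.coe_ringHom_injective <|
      ringHom_ext (f := Φ.toRingHom) (g := Ψ.toRingHom) hleft hv hrep

end RepleteTensor

end PushoutRing

theorem logKaehler_iso_conormal_general {R A P M Q Mgp Qgp : Type u} [CommRing R] [CommRing A]
    [Algebra R A] [CommMonoid P] [CommMonoid M] [CommMonoid Q] [CommGroup Mgp] [CommGroup Qgp]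
    {fb : P →* M} {α : M →* A} {i₁ i₂ : M →* Q} (hQ : IsCommMonoidPushout fb fb i₁ i₂)
    {η : M →* Mgp} (hη : IsGroupCompletion η) {ηQ : Q →* Qgp} (hηQ : IsGroupCompletion ηQ)
    {μgp : Qgp →* Mgp} {ρ : Q →* pullbackSubmonoid η μgp}
    (hρ₁ : ∀ m, (ρ (i₁ m) : M × Qgp) = (m, ηQ (i₁ m)))
    (hρ₂ : ∀ m, (ρ (i₂ m) : M × Qgp) = (m, ηQ (i₂ m)))
    [Algebra (MonoidAlgebra ℤ Q) (A ⊗[R] A)]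
    (hψ₁ : ∀ m, algebraMap (MonoidAlgebra ℤ Q) (A ⊗[R] A) (.single (i₁ m) 1) = α m ⊗ₜ 1)
    (hψ₂ : ∀ m, algebraMap (MonoidAlgebra ℤ Q) (A ⊗[R] A) (.single (i₂ m) 1) = 1 ⊗ₜ α m)
    [Algebra (MonoidAlgebra ℤ Q) (MonoidAlgebra ℤ (pullbackSubmonoid η μgp))]
    (hχ : ∀ q, algebraMap (MonoidAlgebra ℤ Q) (MonoidAlgebra ℤ (pullbackSubmonoid η μgp))
      (.single q 1) = .single (ρ q) 1)
    {ε : RepleteTensor R A Q (pullbackSubmonoid η μgp) →+* A}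
    (hε : ∀ (a b : A) (w : pullbackSubmonoid η μgp),
      ε ((a ⊗ₜ b) ⊗ₜ .single w 1) = a * b * α (w : M × Qgp).1) :
    letI : Module A (RingHom.ker ε).Cotangent :=
      Module.compHom _ (RepleteTensor.inclLeft R A Q (pullbackSubmonoid η μgp))
    Nonempty (LogKaehler R A P M Mgp α fb η ≃ₗ[A] (RingHom.ker ε).Cotangent) := by
  have hμ₁ (m) : μgp (ηQ (i₁ m)) = η m := by simpa [hρ₁] using (ρ (i₁ m)).2.symm
  have hμ₂ (m) : μgp (ηQ (i₂ m)) = η m := by simpa [hρ₂] using (ρ (i₂ m)).2.symm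
  obtain ⟨e, he, he₁, he₂⟩ := exists_repletion_mulEquiv hQ hη hηQ hμ₁ hμ₂
  let := (RepleteTensor.inclLeft R A Q (pullbackSubmonoid η μgp)).toAlgebra
  have h := RepleteTensor.isUniversalLogTwist rfl hQ hχ hψ₁ hψ₂ (e := e)
    (fun m => Prod.ext (by simp [he, hρ₁]) (he₁ _ _ (by rw [hρ₁])))
    (fun m => Prod.ext (by simp [he, hρ₂]) (he₂ _ _ (by rw [hρ₂])))
  have hleft (a) : ε (RepleteTensor.inclLeft R A Q _ a) = a := (hε a 1 1).trans (by simp)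
  have hright (a) : ε (RepleteTensor.inclRight R A Q _ a) = a := (hε 1 a 1).trans (by simp)
  have hunit (x) : ε (RepleteTensor.unitOfGp R A Q e x) = 1 :=
    (hε 1 1 _).trans (by simp [← he])
  exact h.nonempty_logKaehler_equiv { ε with commutes' := hleft } hright hunit

/-- For a map `(f, f♭) : (R, P) → (A, M)` of pre-log rings, the module of log
Kähler differentials `Ω¹_{(A,M)|(R,P)}` is isomorphic, as an `A`-module, to
`I/I²`, where `I` is the kernel of the augmentation
`ε : C = (A ⊗_R A) ⊗_{ℤ[M ⊕_P M]} ℤ[(M ⊕_P M)^rep] → A`. -/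
theorem logKaehler_iso_conormal
    (R A P M Q Mgp Qgp : Type u) [CommRing R] [CommRing A]
    [CommMonoid P] [CommMonoid M] [CommMonoid Q] [CommGroup Mgp] [CommGroup Qgp]
    -- the map of pre-log rings
    (f : R →+* A) (fb : P →* M) (β : P →* R) (α : M →* A)
    (hcompat : ∀ p : P, α (fb p) = f (β p))
    -- `Q = M ⊕_P M`, the pushout in commutative monoids of `M ← P → M`
    (i₁ i₂ : M →* Q) (hQ : IsCommMonoidPushout fb fb i₁ i₂)
    -- `μ : M ⊕_P M → M` is the codiagonal
    (μ : Q →* M) (hμ₁ : μ.comp i₁ = MonoidHom.id M) (hμ₂ : μ.comp i₂ = MonoidHom.id M)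
    -- group completions of `M` and of `M ⊕_P M`
    (η : M →* Mgp) (hη : IsGroupCompletion η)
    (ηQ : Q →* Qgp) (hηQ : IsGroupCompletion ηQ)
    -- `μ^gp : (M ⊕_P M)^gp → M^gp`
    (μgp : Qgp →* Mgp) (hμgp : μgp.comp ηQ = η.comp μ) :
    -- `A` is an `R`-algebra via `f`
    letI : Algebra R A := f.toAlgebra
    -- the repletion `(M ⊕_P M)^rep` is the pullback of `η` and `μ^gp`
    ∀ (rep : Submonoid (M × Qgp)), rep = pullbackSubmonoid η μgp →
    -- the canonical map `M ⊕_P M → (M ⊕_P M)^rep`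
    ∀ (ρ : Q →* rep), (∀ x : Q, (ρ x : M × Qgp) = (μ x, ηQ x)) →
    -- the monoid map `M ⊕_P M → (A ⊗_R A, ·)` with components
    -- `m ↦ α(m) ⊗ 1` and `m ↦ 1 ⊗ α(m)`
    ∀ (θ : Q →* (A ⊗[R] A)),
      (∀ m : M, θ (i₁ m) = α m ⊗ₜ[R] 1) → (∀ m : M, θ (i₂ m) = 1 ⊗ₜ[R] α m) →
    -- the induced ring map `ℤ[M ⊕_P M] → A ⊗_R A`
    ∀ (ψ : MonoidAlgebra ℤ Q →+* (A ⊗[R] A)),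
      (∀ x : Q, ψ (MonoidAlgebra.single x 1) = θ x) →
    -- the ring map `ℤ[M ⊕_P M] → ℤ[(M ⊕_P M)^rep]` induced by `ρ`
    ∀ (χ : MonoidAlgebra ℤ Q →+* MonoidAlgebra ℤ ↥rep),
      (∀ x : Q, χ (MonoidAlgebra.single x 1) = MonoidAlgebra.single (ρ x) 1) →
    letI : Algebra (MonoidAlgebra ℤ Q) (A ⊗[R] A) := ψ.toAlgebra
    letI : Algebra (MonoidAlgebra ℤ Q) (MonoidAlgebra ℤ ↥rep) := χ.toAlgebra
    -- the augmentation `ε : C → A`, induced by the multiplication of `A ⊗_R A`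
    -- and by `α` composed with the projection `(M ⊕_P M)^rep → M`
    ∀ (ε : ((A ⊗[R] A) ⊗[MonoidAlgebra ℤ Q] MonoidAlgebra ℤ ↥rep) →+* A),
      (∀ (a b : A) (w : rep),
        ε ((a ⊗ₜ[R] b) ⊗ₜ[MonoidAlgebra ℤ Q] MonoidAlgebra.single w 1) =
          a * b * α (w : M × Qgp).1) →
    -- the unit `A → C`, making `I/I²` an `A`-module
    ∀ (u : A →+* ((A ⊗[R] A) ⊗[MonoidAlgebra ℤ Q] MonoidAlgebra ℤ ↥rep)),
      (∀ a : A, u a = (a ⊗ₜ[R] (1 : A)) ⊗ₜ[MonoidAlgebra ℤ Q] (1 : MonoidAlgebra ℤ ↥rep)) →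
    letI : Module A (RingHom.ker ε).Cotangent := Module.compHom _ u
    Nonempty ((LogKaehler R A P M Mgp α fb η) ≃ₗ[A] (RingHom.ker ε).Cotangent) := by
  let : Algebra R A := f.toAlgebra
  rintro rep rfl ρ hρ θ hθ₁ hθ₂ ψ hψ χ hχ
  let : Algebra (MonoidAlgebra ℤ Q) (A ⊗[R] A) := ψ.toAlgebra
  let : Algebra (MonoidAlgebra ℤ Q) (MonoidAlgebra ℤ (pullbackSubmonoid η μgp)) := χ.toAlgebra
  intro ε hε u hu
  obtain rfl : u = RepleteTensor.inclLeft R A Q _ := RingHom.ext hu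
  have hμi₁ : ∀ m, μ (i₁ m) = m := DFunLike.congr_fun hμ₁
  have hμi₂ : ∀ m, μ (i₂ m) = m := DFunLike.congr_fun hμ₂
  exact logKaehler_iso_conormal_general hQ hη hηQ (fun m => by rw [hρ, hμi₁])
    (fun m => by rw [hρ, hμi₂]) (fun m => (hψ _).trans (hθ₁ m)) (fun m => (hψ _).trans (hθ₂ m))
    hχ hε
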